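/- Let Ω ⊂ ℝ^N (N ≥ 3) be a bounded open set with C² boundary and δ(x) := dist(x, ∂Ω). For every a ≥ 2 there exist constants c ≥ 1 and β₀ > 0 such that for every β ∈ (0,β₀) and every y ∈ Ω with δ(y) ≤ (a/2)β: ∫_{Σ_β ∩ {x : |x−y| < aβ}} |x−y|^{2−N} dH^{N−1}(x) ≥ β/c. -/

import Mathlib

open MeasureTheory Metric Set

/-- `Ω` has `C²` boundary: near each boundary point, `Ω` coincides with the strict
sublevel set of a `C²` function with nonvanishing derivative. -/
def HasC2Boundary {N : ℕ} (Ω : Set (EuclideanSpace ℝ (Fin N))) : Prop :=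
  ∀ p ∈ frontier Ω, ∃ (U : Set (EuclideanSpace ℝ (Fin N)))
    (f : EuclideanSpace ℝ (Fin N) → ℝ),
    IsOpen U ∧ p ∈ U ∧ ContDiffOn ℝ 2 f U ∧ (∀ x ∈ U, fderiv ℝ f x ≠ 0) ∧
    Ω ∩ U = {x ∈ U | f x < 0}

open scoped Topology

/-- At the point `p`, the unit vector `n` points into `Ω`: a truncated open cone with vertex `p`
and axis `n` lies in `Ω`, and every segment issuing from `p` into `Ω` makes an angle with `n`
that is at most slightly obtuse. -/
def IsInwardDirection {E : Type*} [NormedAddCommGroup E] [InnerProductSpace ℝ E]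
    (Ω : Set E) (r : ℝ) (p n : E) : Prop :=
  ‖n‖ = 1 ∧ (∀ t, 0 < t → t < r → ball (p + t • n) (9 / 10 * t) ⊆ Ω) ∧
    ∀ d : E, (∀ s : ℝ, 0 < s → s < 1 → p + s • d ∈ Ω) → -(1 / 10) * ‖d‖ ≤ inner ℝ n d

theorem IsInwardDirection.mono {E : Type*} [NormedAddCommGroup E] [InnerProductSpace ℝ E]
    {Ω : Set E} {r r' : ℝ} {p n : E} (h : IsInwardDirection Ω r p n) (hr : r' ≤ r) :
    IsInwardDirection Ω r' p n :=
  ⟨h.1, fun t ht htr => h.2.1 t ht (htr.trans_le hr), h.2.2⟩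

/-- Near a frontier point where `Ω` is a strict sublevel set of a strictly differentiable function
with nonzero derivative, the normalized negative gradient is an inward direction at all frontier
points. -/
theorem exists_isInwardDirection_nhds {E : Type*} [NormedAddCommGroup E] [InnerProductSpace ℝ E]
    [CompleteSpace E] {Ω U : Set E} {f : E → ℝ} {L : E →L[ℝ] ℝ} {p₀ : E} (hU : IsOpen U)
    (hΩ : IsOpen Ω) (hp₀ : p₀ ∈ U) (hfU : ContinuousOn f U) (hf : HasStrictFDerivAt f L p₀)
    (hL : L ≠ 0) (hΩU : Ω ∩ U = {x ∈ U | f x < 0}) :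
    ∃ r : ℝ, 0 < r ∧ ∃ n : E, ∀ p ∈ frontier Ω ∩ ball p₀ r, IsInwardDirection Ω r p n := by
  have mem_iff : ∀ x ∈ U, x ∈ Ω ↔ f x < 0 := fun x hx => by
    have := Set.ext_iff.1 hΩU x
    simp only [mem_inter_iff, mem_ofPred_eq, hx, and_true, true_and] at this
    exact this
  have hzero : ∀ p ∈ frontier Ω, p ∈ U → f p = 0 := by
    intro p hp hpU
    refine le_antisymm ?_ ?_
    · by_contra! hpos
      have hev : ∀ᶠ x in 𝓝 p, 0 < f x ∧ x ∈ U :=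
        ((hfU.continuousAt (hU.mem_nhds hpU)).eventually (lt_mem_nhds hpos)).and
          (hU.mem_nhds hpU)
      obtain ⟨x, ⟨hx0, hxU⟩, hxΩ⟩ := mem_closure_iff_nhds.1 (frontier_subset_closure hp) _ hev
      exact absurd ((mem_iff x hxU).1 hxΩ) hx0.not_gt
    · by_contra! hneg
      exact disjoint_left.1 (disjoint_frontier_iff_isOpen.2 hΩ) hp ((mem_iff p hpU).2 hneg)
  set G : E := (InnerProductSpace.toDual ℝ E).symm L with hG
  have hLG : ∀ x, L x = inner ℝ G x := fun x => by simp [hG]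
  have hG0 : G ≠ 0 := by simpa [hG] using hL
  have hg : 0 < ‖G‖ := norm_pos_iff.2 hG0
  obtain ⟨S, hS, happ⟩ := hf.approximates_deriv_on_nhds (c := ‖G‖₊ / 20)
    (Or.inr (by have : 0 < ‖G‖₊ := hg
                positivity))
  obtain ⟨R, hR, hRS⟩ := Metric.mem_nhds_iff.1 (Filter.inter_mem hS (hU.mem_nhds hp₀))
  set n : E := -(‖G‖⁻¹ • G) with hn
  have hLn : ∀ x, L x = -(‖G‖ * inner ℝ n x) := fun x => by
    rw [hLG, hn, inner_neg_left, real_inner_smul_left]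
    field_simp
  have hn1 : ‖n‖ = 1 := by
    rw [hn, norm_neg, norm_smul, norm_inv, norm_norm, inv_mul_cancel₀ hg.ne']
  have key : ∀ p ∈ frontier Ω, p ∈ ball p₀ R → ∀ w, p + w ∈ ball p₀ R →
      (p + w ∈ Ω ↔ f (p + w) < 0) ∧ |f (p + w) + ‖G‖ * inner ℝ n w| ≤ ‖G‖ / 20 * ‖w‖ := by
    intro p hp hpR w hw
    refine ⟨mem_iff _ (hRS hw).2, ?_⟩
    have := happ (p + w) (hRS hw).1 p (hRS hpR).1
    rw [hzero p hp (hRS hpR).2, add_sub_cancel_left, hLn] at this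
    simpa using this
  refine ⟨R / 4, by positivity, n, fun p hp => ⟨hn1, ?_, ?_⟩⟩
  · intro t ht htr x hx
    obtain ⟨u, rfl⟩ : ∃ u, x = p + (t • n + u) := ⟨x - p - t • n, by abel⟩
    have hu : ‖u‖ < 9 / 10 * t := by
      simpa [dist_eq_norm, ← add_assoc] using hx
    have hwn : ‖t • n + u‖ ≤ t + ‖u‖ := by
      refine (norm_add_le _ _).trans ?_
      rw [norm_smul, hn1, Real.norm_of_nonneg ht.le, mul_one]
    have hpd : dist p p₀ < R / 4 := hp.2
    have hw : p + (t • n + u) ∈ ball p₀ R := by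
      rw [mem_ball]
      have : dist (p + (t • n + u)) p = ‖t • n + u‖ := by simp [dist_eq_norm]
      have := dist_triangle (p + (t • n + u)) p p₀
      linarith
    obtain ⟨h1, h2⟩ := key p hp.1 (by rw [mem_ball]; linarith) _ hw
    rw [h1]
    have hin : inner ℝ n (t • n + u) = t + inner ℝ n u := by
      rw [inner_add_right, real_inner_smul_right, real_inner_self_eq_norm_sq, hn1]; ring
    have hnu : -‖u‖ ≤ inner ℝ n u := by
      have := (abs_le.1 (abs_real_inner_le_norm n u)).1
      rwa [hn1, one_mul] at this
    have h3 := (abs_le.1 h2).2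
    rw [hin] at h3
    have h4 : ‖G‖ / 20 * ‖t • n + u‖ ≤ ‖G‖ * (19 / 200 * t) := by nlinarith
    have h5 : ‖G‖ * (1 / 10 * t) < ‖G‖ * (t + inner ℝ n u) := by
      apply mul_lt_mul_of_pos_left _ hg; linarith
    have h6 : 0 < ‖G‖ * t := by positivity
    linarith
  · intro d hd
    have hpd : dist p p₀ < R / 4 := hp.2
    obtain ⟨s, hs0, hs1, hsd⟩ : ∃ s : ℝ, 0 < s ∧ s < 1 ∧ s * ‖d‖ < R / 4 := by
      have hc : Filter.Tendsto (fun s : ℝ => s * ‖d‖) (𝓝[>] 0) (𝓝 0) := by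
        have : Continuous fun s : ℝ => s * ‖d‖ := by fun_prop
        simpa using (this.tendsto 0).mono_left nhdsWithin_le_nhds
      have h1 := hc.eventually (gt_mem_nhds (show (0:ℝ) < R / 4 by positivity))
      have h2 : ∀ᶠ s : ℝ in 𝓝[>] 0, s ∈ Ioo (0:ℝ) 1 := Ioo_mem_nhdsGT one_pos
      obtain ⟨s, hs, hs'⟩ := (h1.and h2).exists
      exact ⟨s, hs'.1, hs'.2, hs⟩
    have hnsd : ‖s • d‖ = s * ‖d‖ := by rw [norm_smul, Real.norm_of_nonneg hs0.le]
    have hw : p + s • d ∈ ball p₀ R := by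
      rw [mem_ball]
      have : dist (p + s • d) p = ‖s • d‖ := by simp [dist_eq_norm]
      have := dist_triangle (p + s • d) p p₀
      linarith
    obtain ⟨h1, h2⟩ := key p hp.1 (by rw [mem_ball]; linarith) _ hw
    have h3 := h1.1 (hd s hs0 hs1)
    have h4 := (abs_le.1 h2).1
    rw [hnsd, real_inner_smul_right] at h4
    by_contra! hlt
    have h5 : (‖G‖ * s) * inner ℝ n d < (‖G‖ * s) * (-(1 / 10) * ‖d‖) :=
      mul_lt_mul_of_pos_left hlt (by positivity)
    have h6 : 0 ≤ ‖G‖ * s * ‖d‖ := by positivity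
    nlinarith

theorem HasC2Boundary.exists_isInwardDirection {N : ℕ} {Ω : Set (EuclideanSpace ℝ (Fin N))}
    (hΩo : IsOpen Ω) (hΩb : Bornology.IsBounded Ω) (hΩ2 : HasC2Boundary Ω) :
    ∃ r : ℝ, 0 < r ∧ ∀ p ∈ frontier Ω, ∃ n, IsInwardDirection Ω r p n := by
  have hcomp : IsCompact (frontier Ω) := isCompact_of_isClosed_isBounded isClosed_frontier
    (hΩb.closure.subset frontier_subset_closure)
  refine hcomp.induction_on (p := fun S => ∃ r : ℝ, 0 < r ∧ ∀ p ∈ S, ∃ n,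
    IsInwardDirection Ω r p n) ⟨1, one_pos, by simp⟩ ?_ ?_ ?_
  · rintro S T hST ⟨r, hr, h⟩
    exact ⟨r, hr, fun p hp => h p (hST hp)⟩
  · rintro S T ⟨r, hr, h⟩ ⟨r', hr', h'⟩
    refine ⟨min r r', lt_min hr hr', ?_⟩
    rintro p (hp | hp)
    · exact (h p hp).imp fun n hn => hn.mono (min_le_left _ _)
    · exact (h' p hp).imp fun n hn => hn.mono (min_le_right _ _)
  · intro p hp
    obtain ⟨U, f, hU, hpU, hf, hf', hΩU⟩ := hΩ2 p hp
    obtain ⟨r, hr, n, h⟩ := exists_isInwardDirection_nhds hU hΩo hpU hf.continuousOn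
      ((hf.contDiffAt (hU.mem_nhds hpU)).hasStrictFDerivAt two_ne_zero) (hf' p hpU) hΩU
    exact ⟨frontier Ω ∩ ball p r, Filter.inter_mem self_mem_nhdsWithin
      (mem_nhdsWithin_of_mem_nhds (ball_mem_nhds p hr)), r, hr, fun q hq => ⟨n, h q hq⟩⟩

theorem ball_infDist_frontier_subset {E : Type*} [NormedAddCommGroup E] [NormedSpace ℝ E]
    {Ω : Set E} (hΩ : IsOpen Ω) {y : E} (hy : y ∈ Ω) : ball y (infDist y (frontier Ω)) ⊆ Ω := by
  rcases (ball y (infDist y (frontier Ω))).eq_empty_or_nonempty with h | h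
  · simp [h]
  refine (convex_ball y _).isPreconnected.subset_left_of_subset_union hΩ
    (isClosed_closure (s := Ω)).isOpen_compl
    (disjoint_compl_right.mono_left subset_closure) ?_ ⟨y, mem_ball_self (nonempty_ball.1 h), hy⟩
  intro x hx
  by_contra hcon
  simp only [mem_union, mem_compl_iff, not_or, not_not] at hcon
  have hxf : x ∈ frontier Ω := by rw [hΩ.frontier_eq]; exact ⟨hcon.2, hcon.1⟩
  have := infDist_le_dist_of_mem (x := y) hxf
  rw [mem_ball, dist_comm] at hx
  linarith

/-- Along a ray in an inward direction, shifted sideways by a short vector `v`, the distance to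
the frontier takes the value `β`. -/
theorem IsInwardDirection.exists_infDist_eq {E : Type*} [NormedAddCommGroup E]
    [InnerProductSpace ℝ E] {Ω : Set E} (hΩ : IsOpen Ω) {r β : ℝ} {p n v : E}
    (h : IsInwardDirection Ω r p n) (hp : p ∈ frontier Ω) (hβ : 0 < β) (hβr : 2 * β < r)
    (hv : ‖v‖ < β / 20) :
    ∃ t ∈ Icc (β / 2) (6 / 5 * β), p + t • n + v ∈ Ω ∧
      infDist (p + t • n + v) (frontier Ω) = β := by
  have hcont : ContinuousOn (fun t : ℝ => infDist (p + t • n + v) (frontier Ω))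
      (Icc (β / 2) (6 / 5 * β)) := by
    refine ((continuous_infDist_pt _).comp ?_).continuousOn
    fun_prop
  have hlow : infDist (p + (β / 2) • n + v) (frontier Ω) ≤ β := by
    refine (infDist_le_dist_of_mem hp).trans ?_
    have h1 : dist (p + (β / 2) • n + v) p = ‖(β / 2) • n + v‖ := by
      rw [dist_eq_norm, add_assoc, add_sub_cancel_left]
    have h2 := norm_add_le ((β / 2) • n) v
    rw [norm_smul, h.1, Real.norm_of_nonneg (by positivity)] at h2
    linarith
  have hhigh : β ≤ infDist (p + (6 / 5 * β) • n + v) (frontier Ω) := by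
    refine (le_infDist ⟨p, hp⟩).2 fun q hq => ?_
    by_contra! hlt
    refine disjoint_left.1 (disjoint_frontier_iff_isOpen.2 hΩ) hq
      (h.2.1 (6 / 5 * β) (by positivity) (by linarith) ?_)
    rw [mem_ball]
    have h1 := dist_triangle q (p + (6 / 5 * β) • n + v) (p + (6 / 5 * β) • n)
    have h2 : dist (p + (6 / 5 * β) • n + v) (p + (6 / 5 * β) • n) = ‖v‖ := by simp [dist_eq_norm]
    rw [dist_comm q (p + (6 / 5 * β) • n + v)] at h1
    linarith
  obtain ⟨t, ht, hte⟩ := intermediate_value_Icc (by linarith) hcont ⟨hlow, hhigh⟩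
  refine ⟨t, ht, h.2.1 t (by linarith [ht.1]) (by linarith [ht.2]) ?_, hte⟩
  rw [mem_ball, dist_eq_norm, add_sub_cancel_left]
  linarith [ht.1]

theorem IsInwardDirection.dist_lt {E : Type*} [NormedAddCommGroup E] [InnerProductSpace ℝ E]
    {Ω : Set E} {r β a t : ℝ} {p n v y : E} (h : IsInwardDirection Ω r p n) (hβ : 0 < β)
    (ha : 2 ≤ a) (hv : ‖v‖ < β / 20) (ht : t ∈ Icc (β / 2) (6 / 5 * β))
    (hy : ‖y - p‖ ≤ a / 2 * β) (hseg : ∀ s : ℝ, 0 < s → s < 1 → p + s • (y - p) ∈ Ω) :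
    dist (p + t • n + v) y < a * β := by
  have hin := h.2.2 _ hseg
  have ht0 : 0 < t := by linarith [ht.1]
  have haβ : 2 * β ≤ a * β := by nlinarith
  have hsq : ‖t • n - (y - p)‖ ^ 2 ≤ (9 / 10 * (a * β)) ^ 2 := by
    rw [norm_sub_sq_real, norm_smul, h.1, Real.norm_of_nonneg ht0.le, real_inner_smul_left]
    have h1 : t * (-(1 / 10) * ‖y - p‖) ≤ t * inner ℝ n (y - p) :=
      mul_le_mul_of_nonneg_left hin ht0.le
    have h2 : t * ‖y - p‖ ≤ (3 / 5 * (a * β)) * (a / 2 * β) :=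
      mul_le_mul (by linarith [ht.2]) hy (norm_nonneg _) (by positivity)
    have h3 : ‖y - p‖ ^ 2 ≤ (a / 2 * β) ^ 2 := pow_le_pow_left₀ (norm_nonneg _) hy 2
    have h4 : t ^ 2 ≤ (3 / 5 * (a * β)) ^ 2 := pow_le_pow_left₀ ht0.le (by linarith [ht.2]) 2
    nlinarith [sq_nonneg (a * β)]
  have hle := le_of_sq_le_sq hsq (by positivity)
  have heq : p + t • n + v - y = (t • n - (y - p)) + v := by abel
  rw [dist_eq_norm, heq]
  have := norm_add_le (t • n - (y - p)) v
  linarith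

/-- A set meeting every line parallel to `n` near `p` has Hausdorff measure bounded below. -/
theorem le_hausdorffMeasure_of_forall_exists_smul_add_mem {k : ℕ}
    {p n : EuclideanSpace ℝ (Fin (k + 1))} (hn : n ≠ 0) {ρ : ℝ} (hρ : 0 < ρ)
    {S : Set (EuclideanSpace ℝ (Fin (k + 1)))}
    (hS : ∀ v, inner ℝ n v = 0 → ‖v‖ ≤ k * ρ → ∃ t : ℝ, p + t • n + v ∈ S) :
    ENNReal.ofReal ((2 * ρ) ^ k) ≤ μH[(k : ℝ)] S := by
  have : Fact (Module.finrank ℝ (EuclideanSpace ℝ (Fin (k + 1))) = k + 1) := ⟨by simp⟩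
  let b := OrthonormalBasis.fromOrthogonalSpanSingleton (𝕜 := ℝ) k hn
  have hbn : ∀ i, inner ℝ n (b i : EuclideanSpace ℝ (Fin (k + 1))) = 0 := fun i =>
    Submodule.mem_orthogonal_singleton_iff_inner_right.1 (b i).2
  let ψ : EuclideanSpace ℝ (Fin (k + 1)) → Fin k → ℝ := fun x i =>
    inner ℝ (b i : EuclideanSpace ℝ (Fin (k + 1))) (x - p)
  have hb1 : ∀ i, ‖(b i : EuclideanSpace ℝ (Fin (k + 1)))‖ = 1 := fun i => by
    rw [← Submodule.coe_norm, b.norm_eq_one]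
  have hψ : LipschitzWith 1 ψ := by
    refine LipschitzWith.of_dist_le_mul fun x y => ?_
    rw [NNReal.coe_one, one_mul]
    refine (dist_pi_le_iff dist_nonneg).2 fun i => ?_
    rw [Real.dist_eq, ← inner_sub_right, sub_sub_sub_cancel_right, dist_eq_norm]
    refine (abs_real_inner_le_norm _ _).trans ?_
    rw [hb1, one_mul]
  have himage : ball 0 ρ ⊆ ψ '' S := by
    intro w hw
    have hwi : ∀ i, |w i| < ρ := (pi_norm_lt_iff hρ).1 (mem_ball_zero_iff.1 hw)
    set v : (Submodule.span ℝ {n})ᗮ := ∑ i, w i • b i with hv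
    have hvn : ‖(v : EuclideanSpace ℝ (Fin (k + 1)))‖ ≤ k * ρ := by
      rw [← Submodule.coe_norm]
      calc ‖v‖ ≤ ∑ i, ‖w i • b i‖ := norm_sum_le _ _
        _ ≤ ∑ _i : Fin k, ρ := Finset.sum_le_sum fun i _ => by
            rw [norm_smul, b.norm_eq_one, mul_one]; exact (hwi i).le
        _ = k * ρ := by simp
    obtain ⟨t, ht⟩ := hS v (Submodule.mem_orthogonal_singleton_iff_inner_right.1 v.2) hvn
    refine ⟨_, ht, funext fun i => ?_⟩
    have h1 : inner ℝ (b i : EuclideanSpace ℝ (Fin (k + 1))) (v : EuclideanSpace ℝ (Fin (k + 1)))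
        = w i := by
      rw [← Submodule.coe_inner, hv, b.orthonormal.inner_right_fintype]
    simp only [ψ]
    rw [add_assoc, add_sub_cancel_left, inner_add_right, real_inner_smul_right, real_inner_comm,
      hbn, h1, mul_zero, zero_add]
  calc ENNReal.ofReal ((2 * ρ) ^ k) = volume (ball (0 : Fin k → ℝ) ρ) := by
        rw [Real.volume_pi_ball _ hρ, Fintype.card_fin]
    _ = μH[(k : ℝ)] (ball (0 : Fin k → ℝ) ρ) := by
        rw [← hausdorffMeasure_pi_real, Fintype.card_fin]
    _ ≤ μH[(k : ℝ)] (ψ '' S) := measure_mono himage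
    _ ≤ μH[(k : ℝ)] S := by
        simpa using hψ.hausdorffMeasure_image_le (Nat.cast_nonneg k) S

theorem stmt14 {N : ℕ} (hN : 3 ≤ N) (Ω : Set (EuclideanSpace ℝ (Fin N)))
    (hΩo : IsOpen Ω) (hΩb : Bornology.IsBounded Ω) (hΩ2 : HasC2Boundary Ω)
    (a : ℝ) (ha : 2 ≤ a) :
    ∃ c : ℝ, 1 ≤ c ∧ ∃ β₀ : ℝ, 0 < β₀ ∧
      ∀ β ∈ Set.Ioo (0:ℝ) β₀, ∀ y ∈ Ω, Metric.infDist y (frontier Ω) ≤ a / 2 * β →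
        ENNReal.ofReal (β / c) ≤
          (∫⁻ x in {x ∈ Ω | Metric.infDist x (frontier Ω) = β} ∩ {x | dist x y < a * β},
            ENNReal.ofReal (dist x y ^ ((2:ℝ) - N)) ∂(μH[(N:ℝ) - 1])) := by
  obtain ⟨k, rfl⟩ : ∃ k, N = k + 1 + 1 := ⟨N - 2, by omega⟩
  obtain ⟨r, hr, hdir⟩ := hΩ2.exists_isInwardDirection hΩo hΩb
  set M : ℝ := 20 * (k + 1) with hM
  have hM1 : 20 ≤ M := by have : (0:ℝ) ≤ k := k.cast_nonneg; linarith
  refine ⟨a ^ k * M ^ (k + 1), one_le_mul_of_one_le_of_one_le (one_le_pow₀ (by linarith))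
    (one_le_pow₀ (by linarith)), r / 2, by positivity, ?_⟩
  rintro β ⟨hβ, hβr⟩ y hy hyδ
  have hne : (frontier Ω).Nonempty := by
    refine nonempty_frontier_iff.2 ⟨⟨y, hy⟩, ?_⟩
    rintro rfl
    exact NormedSpace.unbounded_univ ℝ _ hΩb
  obtain ⟨p, hp, hpy⟩ := isClosed_frontier.exists_infDist_eq_dist hne y
  have hδ : 0 < dist y p := dist_pos.2 fun h =>
    disjoint_left.1 (disjoint_frontier_iff_isOpen.2 hΩo) hp (h ▸ hy)
  have hseg : ∀ s : ℝ, 0 < s → s < 1 → p + s • (y - p) ∈ Ω := fun s hs0 hs1 => by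
    refine ball_infDist_frontier_subset hΩo hy ?_
    have heq : p + s • (y - p) - y = (s - 1) • (y - p) := by rw [sub_smul, one_smul]; abel
    rw [mem_ball, hpy, dist_eq_norm, heq, norm_smul, ← dist_eq_norm y, Real.norm_eq_abs,
      abs_of_neg (by linarith)]
    nlinarith
  obtain ⟨n, hn⟩ := hdir p hp
  set S := {x ∈ Ω | Metric.infDist x (frontier Ω) = β} ∩ {x | dist x y < a * β}
  have hSm : MeasurableSet S :=
    (hΩo.measurableSet.inter (measurable_infDist (measurableSet_singleton β))).inter
      (isOpen_ball (x := y) (ε := a * β)).measurableSet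
  have hmeas : ENNReal.ofReal ((2 * (β / (2 * M))) ^ (k + 1)) ≤ μH[((k + 1 : ℕ) : ℝ)] S := by
    refine le_hausdorffMeasure_of_forall_exists_smul_add_mem (p := p) (n := n)
      (norm_ne_zero_iff.1 (by rw [hn.1]; exact one_ne_zero)) (by positivity) fun v _ hv => ?_
    have hv' : ‖v‖ < β / 20 := by
      refine hv.trans_lt ?_
      have : ((k + 1 : ℕ) : ℝ) * (β / (2 * M)) = β / 40 := by
        rw [hM]; push_cast; field_simp; norm_num
      rw [this]; linarith
    obtain ⟨t, ht, h1, h2⟩ := hn.exists_infDist_eq hΩo hp hβ (by linarith) hv'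
    exact ⟨t, ⟨h1, h2⟩, hn.dist_lt hβ ha hv' ht
      (by rw [← dist_eq_norm, ← hpy]; exact hyδ) hseg⟩
  have hexp : ((k + 1 + 1 : ℕ) : ℝ) - 1 = ((k + 1 : ℕ) : ℝ) := by push_cast; ring
  rw [hexp]
  have haβ : 0 < a * β := by positivity
  have hconst : ENNReal.ofReal (((a * β) ^ k)⁻¹) * μH[((k + 1 : ℕ) : ℝ)] S ≤
      ∫⁻ x in S, ENNReal.ofReal (dist x y ^ ((2:ℝ) - (k + 1 + 1 : ℕ)))
        ∂(μH[((k + 1 : ℕ) : ℝ)]) := by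
    rw [← setLIntegral_const]
    refine setLIntegral_mono_ae' hSm ?_
    have hy0 : μH[((k + 1 : ℕ) : ℝ)] {y} = 0 :=
      (Measure.nullSingletonClass_hausdorff _ (by positivity)).measure_singleton y
    filter_upwards [compl_mem_ae_iff.2 hy0] with x hx hxS
    refine ENNReal.ofReal_le_ofReal ?_
    have hd : 0 < dist x y := dist_pos.2 hx
    have he : (2:ℝ) - (k + 1 + 1 : ℕ) = -(k : ℝ) := by push_cast; ring
    rw [he, Real.rpow_neg hd.le, Real.rpow_natCast]
    exact inv_anti₀ (by positivity) (pow_le_pow_left₀ hd.le hxS.2.le k)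
  refine le_trans ?_ hconst
  refine le_trans ?_ (mul_le_mul_right hmeas _)
  rw [← ENNReal.ofReal_mul (by positivity)]
  refine ENNReal.ofReal_le_ofReal (le_of_eq ?_)
  have hhalf : 2 * (β / (2 * M)) = β / M := by field_simp
  rw [hhalf, mul_pow a β, div_pow]
  field_simp
  ring
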